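/- arXiv:2402.08044 — 2 statements merged into one kernel-verified Lean document; each statement's English description precedes it below -/
import Mathlib

section
/- For every real s > 0 there exists an integrable function g ∈ L¹(ℝⁿ) whose Fourier transform is the function ξ ↦ (1 + |ξ|²)^(−s/2). (The Bessel kernel L_s is an L¹ function for s > 0.) -/
open MeasureTheory Complex
open scoped FourierTransform ENNReal

/-!
Euler's integral gives `(1 + |ξ|²)^(-s/2) = Γ(s/2)⁻¹ ∫₀^∞ t^(s/2 - 1) e^(-t) e^(-t|ξ|²) dt`, which
exhibits the left side as a superposition of Gaussians in `ξ`. Each `e^(-t|ξ|²)` is the Fourier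
transform of a positive Gaussian of total mass `1`, so the same superposition of these Gaussians
converges in `L¹`, because `t^(s/2 - 1) e^(-t)` is integrable on `(0, ∞)`. By Fubini's theorem the
Fourier transform may be taken inside the integral over `t`.
-/

section

variable {V : Type*} [NormedAddCommGroup V] [InnerProductSpace ℝ V]

/-- The Gaussian probability density with Fourier transform `ξ ↦ exp (-t ‖ξ‖²)`: the heat kernel
with time rescaled so that no power of `π` appears on the Fourier side. -/
noncomputable def gaussianKernel (t : ℝ) (x : V) : ℝ :=
  (Real.pi / t) ^ (Module.finrank ℝ V / 2 : ℝ) * Real.exp (-(Real.pi ^ 2 / t) * ‖x‖ ^ 2)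

/-- The superposition of the kernels `gaussianKernel t` with complex weights `w t ∂μ(t)`. Only
measures `μ` concentrated on `(0, ∞)` are of interest. -/
noncomputable def gaussianMixture (μ : Measure ℝ) (w : ℝ → ℂ) (x : V) : ℂ :=
  ∫ t, w t * gaussianKernel t x ∂μ

/-- The Bessel kernel `L_s` of complex order `s`, with `0 < s.re`, written as a Gamma-weighted
mixture of Gaussians. -/
noncomputable def besselKernel (s : ℂ) : V → ℂ :=
  (Gamma (s / 2))⁻¹ • gaussianMixture (volume.restrict (Set.Ioi 0))
    fun t ↦ Real.exp (-t) * (t : ℂ) ^ (s / 2 - 1)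

theorem gaussianKernel_nonneg {t : ℝ} (ht : 0 ≤ t) (x : V) : 0 ≤ gaussianKernel t x := by
  unfold gaussianKernel
  positivity

variable [MeasurableSpace V] [BorelSpace V]

theorem measurable_gaussianKernel_uncurry_swap :
    Measurable fun p : V × ℝ ↦ gaussianKernel p.2 p.1 := by
  unfold gaussianKernel
  fun_prop

variable [FiniteDimensional ℝ V]

theorem integral_gaussianKernel {t : ℝ} (ht : 0 < t) : ∫ x : V, gaussianKernel t x = 1 := by
  have hinv : Real.pi / t * (Real.pi / (Real.pi ^ 2 / t)) = 1 := by
    field_simp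
  simp only [gaussianKernel]
  rw [integral_const_mul, GaussianFourier.integral_rexp_neg_mul_sq_norm (by positivity),
    ← Real.mul_rpow (by positivity) (by positivity), hinv, Real.one_rpow]

theorem integrable_gaussianKernel {t : ℝ} (ht : 0 < t) :
    Integrable (gaussianKernel t : V → ℝ) :=
  .of_integral_ne_zero (by simp [integral_gaussianKernel ht])

theorem fourier_const_smul {E : Type*} [NormedAddCommGroup E] [NormedSpace ℂ E]
    (c : ℂ) (f : V → E) : 𝓕 (c • f) = c • 𝓕 f :=
  VectorFourier.fourierIntegral_const_smul 𝐞 volume (innerₗ V) f c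

theorem fourier_integral {E T : Type*} [NormedAddCommGroup E] [NormedSpace ℂ E]
    [MeasurableSpace T] {μ : Measure T} [SFinite μ] {K : V → T → E}
    (hK : Integrable (Function.uncurry K) (volume.prod μ)) (ξ : V) :
    𝓕 (fun x ↦ ∫ t, K x t ∂μ) ξ = ∫ t, 𝓕 (fun x ↦ K x t) ξ ∂μ := by
  have hphase : Continuous fun x : V ↦ (𝐞 (-inner ℝ x ξ) : ℂ) := by fun_prop
  simp only [Real.fourier_eq, Circle.smul_def, ← integral_smul]
  exact integral_integral_swap <| hK.bdd_smul 1
    (hphase.measurable.comp measurable_fst).aestronglyMeasurable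
    (.of_forall fun _ ↦ (Circle.norm_coe _).le)

theorem fourier_gaussianKernel {t : ℝ} (ht : 0 < t) (ξ : V) :
    𝓕 (fun x : V ↦ (gaussianKernel t x : ℂ)) ξ = Real.exp (-(t * ‖ξ‖ ^ 2)) := by
  set b : ℝ := Real.pi ^ 2 / t with hb
  have hb_pos : 0 < b := by positivity
  set c : ℂ := (Real.pi / t : ℝ) ^ (Module.finrank ℝ V / 2 : ℂ) with hc
  have hsplit : (fun x : V ↦ (gaussianKernel t x : ℂ)) = c • fun x ↦ cexp (-b * ‖x‖ ^ 2) := by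
    ext x
    simp [gaussianKernel, hc, hb, ofReal_cpow (div_pos Real.pi_pos ht).le]
  have hexponent : -(Real.pi : ℂ) ^ 2 * ‖ξ‖ ^ 2 / b = (-(t * ‖ξ‖ ^ 2) : ℝ) := by
    norm_cast
    rw [hb]
    field_simp
  have hmass : c * ((Real.pi : ℂ) / b) ^ (Module.finrank ℝ V / 2 : ℂ) = 1 := by
    have hinv : Real.pi / t * (Real.pi / b) = 1 := by rw [hb]; field_simp
    rw [hc, ← ofReal_div, ← mul_cpow_ofReal_nonneg (by positivity) (by positivity), ← ofReal_mul,
      hinv, ofReal_one, one_cpow]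
  rw [hsplit, fourier_const_smul, Pi.smul_apply, smul_eq_mul,
    fourier_gaussian_innerProductSpace (by simpa using hb_pos), ← mul_assoc, hmass, one_mul,
    hexponent, ofReal_exp]

section Mixture

variable {μ : Measure ℝ} [SFinite μ] {w : ℝ → ℂ}

theorem integrable_mul_gaussianKernel_prod (hμ : ∀ᵐ t ∂μ, 0 < t) (hw : Integrable w μ) :
    Integrable (Function.uncurry fun (x : V) t ↦ w t * gaussianKernel t x)
      (volume.prod μ) := by
  have hmeas : AEStronglyMeasurable (Function.uncurry fun (x : V) t ↦ w t * gaussianKernel t x)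
      (volume.prod μ) :=
    hw.aestronglyMeasurable.comp_snd.mul
      measurable_gaussianKernel_uncurry_swap.complex_ofReal.aestronglyMeasurable
  refine (integrable_prod_iff' hmeas).2 ⟨?_, hw.norm.congr ?_⟩
  · filter_upwards [hμ] with t ht
    exact (integrable_gaussianKernel ht).ofReal.const_mul (w t)
  · filter_upwards [hμ] with t ht
    simp only [Function.uncurry, norm_mul, norm_real,
      Real.norm_of_nonneg (gaussianKernel_nonneg ht.le _)]
    rw [integral_const_mul, integral_gaussianKernel ht, mul_one]

theorem integrable_gaussianMixture (hμ : ∀ᵐ t ∂μ, 0 < t) (hw : Integrable w μ) :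
    Integrable (gaussianMixture μ w : V → ℂ) :=
  (integrable_mul_gaussianKernel_prod hμ hw).integral_prod_left

theorem fourier_gaussianMixture (hμ : ∀ᵐ t ∂μ, 0 < t) (hw : Integrable w μ) (ξ : V) :
    𝓕 (gaussianMixture μ w : V → ℂ) ξ = ∫ t, w t * Real.exp (-(t * ‖ξ‖ ^ 2)) ∂μ := by
  refine (fourier_integral (integrable_mul_gaussianKernel_prod hμ hw) ξ).trans
    (integral_congr_ae ?_)
  filter_upwards [hμ] with t ht
  calc 𝓕 (fun x : V ↦ w t * gaussianKernel t x) ξ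
      = w t * 𝓕 (fun x : V ↦ (gaussianKernel t x : ℂ)) ξ :=
        congrFun (fourier_const_smul (w t) fun x ↦ (gaussianKernel t x : ℂ)) ξ
    _ = w t * Real.exp (-(t * ‖ξ‖ ^ 2)) := by rw [fourier_gaussianKernel ht]

end Mixture

section Bessel

variable {s : ℂ}

theorem ae_restrict_Ioi_zero_pos : ∀ᵐ t ∂(volume.restrict (Set.Ioi (0 : ℝ))), 0 < t :=
  ae_restrict_mem measurableSet_Ioi

theorem integrable_besselKernel (hs : 0 < s.re) : Integrable (besselKernel s : V → ℂ) :=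
  (integrable_gaussianMixture ae_restrict_Ioi_zero_pos
    (GammaIntegral_convergent (by simpa using hs))).smul _

theorem fourier_besselKernel (hs : 0 < s.re) (ξ : V) :
    𝓕 (besselKernel s : V → ℂ) ξ = ((1 : ℂ) + (‖ξ‖ : ℂ) ^ 2) ^ (-s / 2) := by
  have hs' : 0 < (s / 2).re := by simpa using hs
  have hr : 0 < 1 + ‖ξ‖ ^ 2 := by positivity
  have hexp (t : ℝ) : (Real.exp (-t) * (t : ℂ) ^ (s / 2 - 1)) * Real.exp (-(t * ‖ξ‖ ^ 2)) =
      (t : ℂ) ^ (s / 2 - 1) * cexp (-((1 + ‖ξ‖ ^ 2 : ℝ) * t)) := by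
    rw [mul_right_comm, ← ofReal_mul, ← Real.exp_add, mul_comm, ofReal_exp]
    push_cast
    ring_nf
  calc 𝓕 (besselKernel s : V → ℂ) ξ
      = (Gamma (s / 2))⁻¹ * ∫ t : ℝ in Set.Ioi 0,
          (Real.exp (-t) * (t : ℂ) ^ (s / 2 - 1)) * Real.exp (-(t * ‖ξ‖ ^ 2)) := by
        rw [besselKernel, fourier_const_smul, Pi.smul_apply, smul_eq_mul,
          fourier_gaussianMixture ae_restrict_Ioi_zero_pos (GammaIntegral_convergent hs')]
    _ = (Gamma (s / 2))⁻¹ * ((1 / (1 + ‖ξ‖ ^ 2 : ℝ)) ^ (s / 2) * Gamma (s / 2)) := by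
        simp only [hexp]
        rw [integral_cpow_mul_exp_neg_mul_Ioi hs' hr]
    _ = (1 / (1 + ‖ξ‖ ^ 2 : ℝ)) ^ (s / 2) := by
        rw [mul_comm, mul_inv_cancel_right₀ (Gamma_ne_zero_of_re_pos hs')]
    _ = ((1 : ℂ) + (‖ξ‖ : ℂ) ^ 2) ^ (-s / 2) := by
        rw [one_div, inv_cpow_ofReal_nonneg hr.le, ← cpow_neg, neg_div]
        push_cast
        rfl

variable (V) in
theorem besselKernel_integrable_general (hs : 0 < s.re) :
    ∃ g : V → ℂ, Integrable g ∧
      ∀ ξ : V, 𝓕 g ξ = ((1 : ℂ) + (‖ξ‖ : ℂ) ^ 2) ^ (-s / 2) :=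
  ⟨besselKernel s, integrable_besselKernel hs, fourier_besselKernel hs⟩

end Bessel

end

/-- The Bessel kernel `L_s` is an `L¹` function for `s > 0`: there is an integrable `g`
whose Fourier transform is `ξ ↦ (1+|ξ|²)^(-s/2)`. -/
theorem besselKernel_integrable (n : ℕ) (s : ℝ) (hs : 0 < s) :
    ∃ g : EuclideanSpace ℝ (Fin n) → ℂ, Integrable g ∧
      ∀ ξ : EuclideanSpace ℝ (Fin n),
        𝓕 g ξ = ((1 : ℂ) + (‖ξ‖ : ℂ) ^ 2) ^ (-(s : ℂ) / 2) :=
  besselKernel_integrable_general (EuclideanSpace ℝ (Fin n)) (s := s) hs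
end

section
/- For every multi-index α on ℝⁿ and every real s > |α| (where |α| is the order of α), there exists an integrable function g ∈ L¹(ℝⁿ) whose Fourier transform is the function ξ ↦ (2πi ξ)^α · (1 + |ξ|²)^(−s/2). (That is, L_s * ∂^α δ ∈ L¹(ℝⁿ) whenever s > |α|.) -/
open MeasureTheory Complex
open scoped FourierTransform ENNReal

/-!
The Gamma integral writes `Γ(s/2) (1 + |ξ|²)^(-s/2)` as the integral over `t > 0` of
`t^(s/2-1) e^(-t) e^(-t|ξ|²)`. If `p` is homogeneous of degree `k`, then `p(ξ) e^(-t|ξ|²)` is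
`t^(-k/2) F(√t ξ)` with `F = p e^(-|·|²)`, and `F`, being a Schwartz function when `p` has
temperate growth, is the Fourier transform of an integrable function. Its `L¹`-normalized dilates
all have the same norm, so their superposition with weight `t^((s-k)/2-1) e^(-t)` converges in
`L¹` as soon as `k < Re s`.
-/

section SchwartzExp

theorem one_add_pow_mul_exp_neg_le {u y c : ℝ} (hu : 0 ≤ u) (h : u ≤ y + c) (m : ℕ) :
    (1 + u) ^ m * Real.exp (-y) ≤ m.factorial * Real.exp (1 + c) := by
  have hpow : (1 + u) ^ m ≤ m.factorial * Real.exp (1 + u) :=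
    (div_le_iff₀' (by positivity)).1 (Real.pow_div_factorial_le_exp (1 + u) (by positivity) m)
  calc (1 + u) ^ m * Real.exp (-y) ≤ m.factorial * Real.exp (1 + u) * Real.exp (-y) := by gcongr
    _ = m.factorial * Real.exp (1 + u - y) := by rw [mul_assoc, ← Real.exp_add, sub_eq_add_neg]
    _ ≤ m.factorial * Real.exp (1 + c) := by gcongr; linarith

variable {E : Type*} [NormedAddCommGroup E] [NormedSpace ℝ E]

theorem norm_iteratedFDeriv_exp_neg (n : ℕ) (t : ℝ) :
    ‖iteratedFDeriv ℝ n (fun u : ℝ ↦ Real.exp (-u)) t‖ = Real.exp (-t) := by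
  have h := iteratedDeriv_exp_const_mul n (-1)
  simp only [neg_one_mul] at h
  simp [norm_iteratedFDeriv_eq_norm_iteratedDeriv, h]

theorem norm_iteratedFDeriv_exp_neg_comp_le {f : E → ℝ} (hf : f.HasTemperateGrowth) (n : ℕ) :
    ∃ (m : ℕ) (C : ℝ), 0 ≤ C ∧ ∀ x,
      ‖iteratedFDeriv ℝ n (fun x ↦ Real.exp (-f x)) x‖ ≤ C * (1 + ‖x‖) ^ m * Real.exp (-f x) := by
  obtain ⟨l, C, hC, hbound⟩ := hf.norm_iteratedFDeriv_le_uniform n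
  refine ⟨l * n, n.factorial * (1 + C) ^ n, by positivity, fun x ↦ ?_⟩
  have hpow : 1 ≤ (1 + ‖x‖) ^ l := one_le_pow₀ (by simp)
  have hfderiv (i : ℕ) (hi : 1 ≤ i) (hin : i ≤ n) :
      ‖iteratedFDeriv ℝ i f x‖ ≤ ((1 + C) * (1 + ‖x‖) ^ l) ^ i :=
    calc ‖iteratedFDeriv ℝ i f x‖ ≤ C * (1 + ‖x‖) ^ l := hbound i hin x
      _ ≤ (1 + C) * (1 + ‖x‖) ^ l := by gcongr; linarith
      _ ≤ ((1 + C) * (1 + ‖x‖) ^ l) ^ i := le_self_pow₀ (by nlinarith) (by omega)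
  calc ‖iteratedFDeriv ℝ n (fun x ↦ Real.exp (-f x)) x‖
      ≤ n.factorial * Real.exp (-f x) * ((1 + C) * (1 + ‖x‖) ^ l) ^ n :=
        norm_iteratedFDeriv_comp_le (g := fun u : ℝ ↦ Real.exp (-u)) (N := n) (by fun_prop)
          (hf.1.of_le (mod_cast le_top)) le_rfl x
          (fun i _ ↦ (norm_iteratedFDeriv_exp_neg i (f x)).le) hfderiv
    _ = n.factorial * (1 + C) ^ n * (1 + ‖x‖) ^ (l * n) * Real.exp (-f x) := by
        rw [mul_pow, ← pow_mul]
        ring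

theorem exists_schwartzMap_eq_exp_neg {f : E → ℝ} (hf : f.HasTemperateGrowth) {c : ℝ}
    (hc : ∀ x, ‖x‖ ≤ f x + c) :
    ∃ γ : SchwartzMap E ℝ, ∀ x, γ x = Real.exp (-f x) := by
  refine ⟨⟨fun x ↦ Real.exp (-f x), Real.contDiff_exp.comp hf.1.neg, fun k n ↦ ?_⟩, fun _ ↦ rfl⟩
  obtain ⟨m, C, hC, hderiv⟩ := norm_iteratedFDeriv_exp_neg_comp_le hf n
  refine ⟨C * ((k + m).factorial * Real.exp (1 + c)), fun x ↦ ?_⟩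
  calc ‖x‖ ^ k * ‖iteratedFDeriv ℝ n (fun x ↦ Real.exp (-f x)) x‖
      ≤ (1 + ‖x‖) ^ k * (C * (1 + ‖x‖) ^ m * Real.exp (-f x)) := by
        gcongr
        · linarith
        · exact hderiv x
    _ = C * ((1 + ‖x‖) ^ (k + m) * Real.exp (-f x)) := by ring
    _ ≤ C * ((k + m).factorial * Real.exp (1 + c)) := by
        gcongr C * ?_
        exact one_add_pow_mul_exp_neg_le (norm_nonneg x) (hc x) _

end SchwartzExp

theorem hasTemperateGrowth_finset_prod {D R ι : Type*} [NormedAddCommGroup D] [NormedSpace ℝ D]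
    [NormedCommRing R] [NormedAlgebra ℝ R] {f : ι → D → R} {S : Finset ι}
    (hf : ∀ i ∈ S, (f i).HasTemperateGrowth) :
    (fun x ↦ ∏ i ∈ S, f i x).HasTemperateGrowth := by
  classical
  induction S using Finset.induction_on with
  | empty => simp
  | insert i S hi ih =>
    simp only [Finset.prod_insert hi]
    exact (hf i (S.mem_insert_self i)).mul (ih fun j hj ↦ hf j (Finset.mem_insert_of_mem hj))

section GammaIntegral

theorem integral_cpow_mul_exp_neg_mul_eq_Gamma_mul_cpow_neg {a : ℂ} (ha : 0 < a.re) {b : ℝ}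
    (hb : 0 < b) :
    ∫ t : ℝ in Set.Ioi 0, (t : ℂ) ^ (a - 1) * cexp (-(b * t)) = Gamma a * (b : ℂ) ^ (-a) := by
  rw [integral_cpow_mul_exp_neg_mul_Ioi ha hb, one_div, inv_cpow, cpow_neg, mul_comm]
  simp [arg_ofReal_of_nonneg hb.le, Real.pi_ne_zero.symm]

theorem ofReal_sqrt_pow_eq_cpow {t : ℝ} (ht : 0 ≤ t) (k : ℕ) :
    ((√t ^ k : ℝ) : ℂ) = (t : ℂ) ^ (k / 2 : ℂ) := by
  rw [Real.sqrt_eq_rpow, ← Real.rpow_mul_natCast ht, ofReal_cpow ht]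
  push_cast
  ring_nf

theorem exp_neg_mul_cpow_smul_gaussian_sqrt_smul {V E : Type*} [NormedAddCommGroup V]
    [NormedSpace ℝ V] [AddCommGroup E] [Module ℂ E] {p : V → E} {k : ℕ}
    (hk : ∀ r > 0, ∀ ξ, p (r • ξ) = (r ^ k : ℝ) • p ξ) {t : ℝ} (ht : 0 < t) (a : ℂ) (ξ : V) :
    (cexp (-t) * (t : ℂ) ^ (a - k / 2 - 1)) • Real.exp (-‖√t • ξ‖ ^ 2) • p (√t • ξ) =
      ((t : ℂ) ^ (a - 1) * cexp (-((1 + ‖ξ‖ ^ 2 : ℝ) * t))) • p ξ := by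
  have hpow : (t : ℂ) ^ (a - 1) = (t : ℂ) ^ (a - k / 2 - 1) * (√t ^ k : ℝ) := by
    rw [ofReal_sqrt_pow_eq_cpow ht.le, ← cpow_add _ _ (ofReal_ne_zero.2 ht.ne')]
    ring_nf
  have hexp : cexp (-((1 + ‖ξ‖ ^ 2 : ℝ) * t)) = cexp (-t) * Real.exp (-‖√t • ξ‖ ^ 2) := by
    rw [norm_smul, Real.norm_of_nonneg t.sqrt_nonneg, mul_pow, Real.sq_sqrt ht.le, ofReal_exp,
      ← Complex.exp_add]
    push_cast
    ring_nf
  rw [hk _ (Real.sqrt_pos.2 ht), hpow, hexp, ← Complex.coe_smul, ← Complex.coe_smul,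
    smul_smul, smul_smul]
  ring_nf

end GammaIntegral

section Fourier

variable {V : Type*} [NormedAddCommGroup V] [InnerProductSpace ℝ V] [FiniteDimensional ℝ V]
  [MeasurableSpace V] [BorelSpace V] {E : Type*} [NormedAddCommGroup E] [NormedSpace ℂ E]

theorem exists_integrable_fourier_eq_exp_neg_norm_sq_smul [CompleteSpace E] {p : V → E}
    (hp : p.HasTemperateGrowth) :
    ∃ G : V → E, Integrable G ∧ ∀ ξ, 𝓕 G ξ = Real.exp (-‖ξ‖ ^ 2) • p ξ := by
  obtain ⟨γ, hγ⟩ := exists_schwartzMap_eq_exp_neg (Function.hasTemperateGrowth_norm_sq (H := V))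
    (c := 1) fun x ↦ by nlinarith [sq_nonneg (‖x‖ - 1)]
  let F : SchwartzMap V E := SchwartzMap.bilinLeftCLM (.lsmul ℝ ℝ) hp γ
  refine ⟨(𝓕⁻ F : SchwartzMap V E), (𝓕⁻ F).integrable, fun ξ ↦ ?_⟩
  rw [← SchwartzMap.fourier_coe, FourierTransform.fourier_fourierInv_eq, ← hγ]
  rfl

section Dilation

variable {T : Type*} [MeasurableSpace T] {μ : Measure T}

theorem fourier_inv_pow_finrank_smul_comp_inv_smul (G : V → E) {r : ℝ} (hr : 0 < r) (ξ : V) :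
    𝓕 (fun x ↦ (r ^ Module.finrank ℝ V)⁻¹ • G (r⁻¹ • x)) ξ = 𝓕 G (r • ξ) := by
  have hinner (x : V) : inner ℝ x ξ = inner ℝ (r⁻¹ • x) (r • ξ) := by
    rw [real_inner_smul_left, real_inner_smul_right, inv_mul_cancel_left₀ hr.ne']
  simp only [Real.fourier_eq, hinner, smul_comm _ (r ^ Module.finrank ℝ V)⁻¹, integral_smul]
  rw [Measure.integral_comp_inv_smul_of_nonneg volume
    (fun x : V ↦ Real.fourierChar (-inner ℝ x (r • ξ)) • G x) hr.le,
    inv_smul_smul₀ (pow_ne_zero _ hr.ne')]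

theorem fourier_integral_comm [SFinite μ] {K : V × T → E} (hK : Integrable K (volume.prod μ))
    (ξ : V) :
    𝓕 (fun x ↦ ∫ t, K (x, t) ∂μ) ξ = ∫ t, 𝓕 (fun x ↦ K (x, t)) ξ ∂μ := by
  have hchar : Integrable (fun p : V × T ↦ Real.fourierChar (-inner ℝ p.1 ξ) • K p)
      (volume.prod μ) := by
    refine hK.mono (.smul (Measurable.aestronglyMeasurable ?_) hK.aestronglyMeasurable) ?_
    · fun_prop
    · exact .of_forall fun p ↦ (Circle.norm_smul _ _).le
  simp only [Real.fourier_eq, Circle.smul_def, ← integral_smul] at hchar ⊢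
  exact integral_integral_swap hchar

theorem integrable_prod_smul_dilation [SFinite μ] {G : V → E} (hG : Integrable G)
    (hGm : StronglyMeasurable G) {w : T → ℂ} (hw : Integrable w μ) {ρ : T → ℝ}
    (hρm : Measurable ρ) (hρ : ∀ᵐ t ∂μ, 0 < ρ t) :
    Integrable (fun q : V × T ↦ w q.2 • (ρ q.2 ^ Module.finrank ℝ V)⁻¹ • G ((ρ q.2)⁻¹ • q.1))
      (volume.prod μ) := by
  have hm : AEStronglyMeasurable
      (fun q : V × T ↦ w q.2 • (ρ q.2 ^ Module.finrank ℝ V)⁻¹ • G ((ρ q.2)⁻¹ • q.1))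
      (volume.prod μ) := by
    have hscale : Measurable fun q : V × T ↦ (ρ q.2 ^ Module.finrank ℝ V)⁻¹ := by fun_prop
    have hdil : StronglyMeasurable fun q : V × T ↦ G ((ρ q.2)⁻¹ • q.1) :=
      hGm.comp_measurable (by fun_prop)
    exact hw.aestronglyMeasurable.comp_snd.smul
      (hscale.stronglyMeasurable.smul hdil).aestronglyMeasurable
  refine (integrable_prod_iff' hm).2 ⟨?_, (hw.norm.mul_const (∫ x, ‖G x‖)).congr ?_⟩
  · filter_upwards [hρ] with t ht
    exact ((hG.comp_smul (inv_ne_zero ht.ne')).smul _).smul (w t)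
  · filter_upwards [hρ] with t ht
    simp only [norm_smul, integral_const_mul]
    rw [Measure.integral_comp_inv_smul_of_nonneg volume (fun x ↦ ‖G x‖) ht.le,
      Real.norm_of_nonneg (by positivity), smul_eq_mul, inv_mul_cancel_left₀ (by positivity)]

theorem exists_integrable_fourier_eq_integral_dilation [SFinite μ] {G : V → E} (hG : Integrable G)
    {w : T → ℂ} (hw : Integrable w μ) {ρ : T → ℝ} (hρm : Measurable ρ)
    (hρ : ∀ᵐ t ∂μ, 0 < ρ t) :
    ∃ g : V → E, Integrable g ∧ ∀ ξ, 𝓕 g ξ = ∫ t, w t • 𝓕 G (ρ t • ξ) ∂μ := by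
  obtain ⟨H, hHm, hGH⟩ := hG.aestronglyMeasurable
  have hK := integrable_prod_smul_dilation (hG.congr hGH) hHm hw hρm hρ
  refine ⟨_, hK.integral_prod_left, fun ξ ↦ ?_⟩
  rw [fourier_integral_comm hK]
  refine integral_congr_ae ?_
  filter_upwards [hρ] with t ht
  rw [Real.fourier_congr_ae hGH, ← fourier_inv_pow_finrank_smul_comp_inv_smul H ht]
  simp only [Real.fourier_eq, smul_comm _ (w t), integral_smul]

end Dilation

theorem exists_integrable_fourier_eq_one_add_norm_sq_cpow_smul [CompleteSpace E] {p : V → E}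
    (hp : p.HasTemperateGrowth) {k : ℕ} (hk : ∀ r > 0, ∀ ξ, p (r • ξ) = (r ^ k : ℝ) • p ξ)
    {s : ℂ} (hs : k < s.re) :
    ∃ g : V → E, Integrable g ∧ ∀ ξ, 𝓕 g ξ = (1 + (‖ξ‖ : ℂ) ^ 2) ^ (-s / 2) • p ξ := by
  have hsk : 0 < (s / 2 - k / 2).re := by simpa [← sub_div] using hs
  have hs0 : 0 < (s / 2).re := by simpa using k.cast_nonneg.trans_lt hs
  obtain ⟨G, hG, hGξ⟩ := exists_integrable_fourier_eq_exp_neg_norm_sq_smul hp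
  obtain ⟨g, hg, hgξ⟩ := exists_integrable_fourier_eq_integral_dilation hG
    (GammaIntegral_convergent hsk) Real.continuous_sqrt.measurable
    ((ae_restrict_mem measurableSet_Ioi).mono fun t ↦ Real.sqrt_pos.2)
  have hgΓ (ξ : V) : 𝓕 g ξ = (Gamma (s / 2) * (1 + (‖ξ‖ : ℂ) ^ 2) ^ (-s / 2)) • p ξ :=
    calc 𝓕 g ξ = ∫ t : ℝ in Set.Ioi 0,
          ((t : ℂ) ^ (s / 2 - 1) * cexp (-((1 + ‖ξ‖ ^ 2 : ℝ) * t))) • p ξ := by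
          rw [hgξ]
          refine setIntegral_congr_fun measurableSet_Ioi fun t ht ↦ ?_
          simp only [hGξ, ofReal_exp, ofReal_neg]
          exact exp_neg_mul_cpow_smul_gaussian_sqrt_smul hk ht (s / 2) ξ
      _ = (Gamma (s / 2) * (1 + (‖ξ‖ : ℂ) ^ 2) ^ (-s / 2)) • p ξ := by
          rw [integral_smul_const,
            integral_cpow_mul_exp_neg_mul_eq_Gamma_mul_cpow_neg hs0 (by positivity), neg_div]
          push_cast
          rfl
  refine ⟨(Gamma (s / 2))⁻¹ • g, hg.smul _, fun ξ ↦ ?_⟩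
  have hsmul : 𝓕 ((Gamma (s / 2))⁻¹ • g) = (Gamma (s / 2))⁻¹ • 𝓕 g :=
    VectorFourier.fourierIntegral_const_smul ..
  rw [hsmul, Pi.smul_apply, hgΓ, smul_smul, inv_mul_cancel_left₀ (Gamma_ne_zero_of_re_pos hs0)]

end Fourier

theorem besselKernel_deriv_integrable_general {ι : Type*} [Fintype ι] (α : ι → ℕ) {s : ℂ}
    (hs : (∑ j, α j : ℝ) < s.re) :
    ∃ g : EuclideanSpace ℝ ι → ℂ, Integrable g ∧
      ∀ ξ : EuclideanSpace ℝ ι,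
        𝓕 g ξ = (∏ j, (2 * Real.pi * Complex.I * (ξ j : ℂ)) ^ (α j)) *
          ((1 : ℂ) + (‖ξ‖ : ℂ) ^ 2) ^ (-s / 2) := by
  have hgrowth : (fun ξ : EuclideanSpace ℝ ι ↦
      ∏ j, (2 * Real.pi * Complex.I * (ξ j : ℂ)) ^ (α j)).HasTemperateGrowth := by
    refine hasTemperateGrowth_finset_prod fun j _ ↦ .pow (.mul (.const _) ?_) _
    exact (ofRealCLM ∘L EuclideanSpace.proj j).hasTemperateGrowth
  have hhom (r : ℝ) (_ : r > 0) (ξ : EuclideanSpace ℝ ι) :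
      ∏ j, (2 * Real.pi * Complex.I * ((r • ξ) j : ℂ)) ^ (α j) =
        r ^ (∑ j, α j) • ∏ j, (2 * Real.pi * Complex.I * (ξ j : ℂ)) ^ (α j) := by
    simp only [← Finset.prod_pow_eq_pow_sum, real_smul, ofReal_prod, ← Finset.prod_mul_distrib,
      PiLp.smul_apply, smul_eq_mul, ofReal_mul, ofReal_pow, ← mul_pow, mul_left_comm _ (r : ℂ)]
  obtain ⟨g, hg, hgξ⟩ := exists_integrable_fourier_eq_one_add_norm_sq_cpow_smul hgrowth hhom
    (by simpa using hs)
  exact ⟨g, hg, fun ξ ↦ by rw [hgξ, smul_eq_mul, mul_comm]⟩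

/-- `L_s * ∂^α δ ∈ L¹(ℝⁿ)` for `s > |α|`: there is an integrable `g` whose Fourier
transform is `ξ ↦ (2πiξ)^α (1+|ξ|²)^(-s/2)`. -/
theorem besselKernel_deriv_integrable (n : ℕ) (α : Fin n → ℕ) (s : ℝ)
    (hs : (∑ j, α j : ℝ) < s) :
    ∃ g : EuclideanSpace ℝ (Fin n) → ℂ, Integrable g ∧
      ∀ ξ : EuclideanSpace ℝ (Fin n),
        𝓕 g ξ = (∏ j, (2 * Real.pi * Complex.I * (ξ j : ℂ)) ^ (α j)) *
          ((1 : ℂ) + (‖ξ‖ : ℂ) ^ 2) ^ (-(s : ℂ) / 2) :=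
  besselKernel_deriv_integrable_general α (by simpa using hs)
end
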